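/- arXiv:1412.4284 — 3 statements merged into one kernel-verified Lean document; each statement's English description precedes it below -/
import Mathlib

section
/- Let A ⊂ ℕ be a finite alphabet with |A| ≥ 2 and let Γ_A ⊂ SL₂(ℤ) be the semigroup generated by the matrices g_a g_{a'} for a, a' ∈ A, where g_a = [[0,1],[1,a]]. Then every element of Γ_A (i.e., every nonempty product of the generators) has trace strictly greater than 2. -/
/-- `SL₂(ℤ)`. -/
abbrev SL2Z := Matrix.SpecialLinearGroup (Fin 2) ℤ

/-- The element `g_a g_{a'} = [[0,1],[1,a]]·[[0,1],[1,a']] = [[1,a'],[a,aa'+1]]` of `SL₂(ℤ)`. -/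
def gPair (a a' : ℕ) : SL2Z :=
  ⟨!![1, (a' : ℤ); (a : ℤ), (a : ℤ) * (a' : ℤ) + 1], by
    simp [Matrix.det_fin_two_of]; ring⟩

/-- The generating set `S_A = {g_a g_{a'} : a, a' ∈ A}` of the semigroup `Γ_A`. -/
def gensSet (A : Finset ℕ) : Set SL2Z := {g | ∃ a ∈ A, ∃ a' ∈ A, g = gPair a a'}

/-- The semigroup `Γ_A ⊂ SL₂(ℤ)`: all nonempty products of the generators `g_a g_{a'}`. -/
def GammaA (A : Finset ℕ) : Set SL2Z :=
  {g | ∃ l : List SL2Z, l ≠ [] ∧ (∀ x ∈ l, x ∈ gensSet A) ∧ l.prod = g}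

/-- Reduction modulo `q`, `SL₂(ℤ) →* SL₂(ℤ/qℤ)`. -/
def modq (q : ℕ) : SL2Z →* Matrix.SpecialLinearGroup (Fin 2) (ZMod q) :=
  Matrix.SpecialLinearGroup.map (Int.castRingHom (ZMod q))

/-- Entries of any (possibly empty) product of generators are bounded below. -/
lemma prod_entries (A : Finset ℕ) (hA1 : ∀ a ∈ A, 1 ≤ a) (l : List SL2Z)
    (hl : ∀ x ∈ l, x ∈ gensSet A) :
    1 ≤ l.prod.val 0 0 ∧ 0 ≤ l.prod.val 0 1 ∧ 0 ≤ l.prod.val 1 0 ∧ 1 ≤ l.prod.val 1 1 ∧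
      (l ≠ [] → 2 ≤ l.prod.val 1 1) := by
  induction l with
  | nil => simp
  | cons x t ih =>
    obtain ⟨hp, hq, hr, hs, -⟩ := ih fun y hy => hl y (List.mem_cons_of_mem _ hy)
    obtain ⟨a, ha, b, hb, rfl⟩ := hl x List.mem_cons_self
    have ha1 : (1 : ℤ) ≤ a := by exact_mod_cast hA1 a ha
    have hb1 : (1 : ℤ) ≤ b := by exact_mod_cast hA1 b hb
    have hab : (1 : ℤ) ≤ a * b := by nlinarith
    rw [List.prod_cons, Matrix.SpecialLinearGroup.coe_mul]
    generalize t.prod.val = M at *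
    simp only [Matrix.mul_apply, Fin.sum_univ_two, gPair, Matrix.of_apply, Matrix.cons_val',
      Matrix.cons_val_zero, Matrix.cons_val_one, Matrix.cons_val_fin_one]
    refine ⟨?_, ?_, ?_, ?_, fun _ => ?_⟩ <;> nlinarith [mul_nonneg (by linarith : (0 : ℤ) ≤ b) hr,
      mul_nonneg (by linarith : (0 : ℤ) ≤ a) hq, mul_nonneg (by linarith : (0 : ℤ) ≤ a * b) hr]

/-- **Traces in `Γ_A` exceed 2.** Every element of the semigroup `Γ_A` generated by the
matrices `g_a g_{a'}` (`a, a' ∈ A`, `A` a finite alphabet of positive integers with `|A| ≥ 2`)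
has trace strictly greater than `2`. -/
theorem GammaA_trace_gt_two (A : Finset ℕ) (hA : 2 ≤ A.card) (hA1 : ∀ a ∈ A, 1 ≤ a)
    (γ : SL2Z) (hγ : γ ∈ GammaA A) : 2 < γ.val.trace := by
  obtain ⟨l, hne, hl, rfl⟩ := hγ
  obtain ⟨hp, -, -, -, hs⟩ := prod_entries A hA1 l hl
  have := hs hne
  rw [Matrix.trace_fin_two]
  linarith
end

section
/- For the continued fraction system associated to a finite alphabet A ⊂ ℕ with |A| ≥ 2, there exist r > 0 and 0 < κ < 1 such that for every z in the closed upper half-plane ℍ ∪ ℝ with Euclidean distance d_E(z, I) < r, and for every j = (a,a') ∈ A×A, the Möbius image satisfies d_E(γ_j(z), I) ≤ κ · d_E(z, I). -/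
/-- The Möbius map of `g_a = [[0,1],[1,a]]` on `ℝ`: `x ↦ 1/(x+a)`. -/
noncomputable def gmap (a : ℕ) (x : ℝ) : ℝ := 1 / (x + (a : ℝ))

/-- The Möbius map `γ_j` of `g_a g_{a'}` for `j = (a,a')`: `x ↦ g_a(g_{a'}(x))`. -/
noncomputable def gam (j : ℕ × ℕ) (x : ℝ) : ℝ := gmap j.1 (gmap j.2 x)

/-- The interval `I_j = γ_j([1/(A_max+1), 1])`, where `A_max = max A` (here `A.sup id`). -/
noncomputable def Ij (A : Finset ℕ) (j : ℕ × ℕ) : Set ℝ :=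
  gam j '' Set.Icc (1 / (((A.sup id : ℕ) : ℝ) + 1)) 1

/-- `I = ⋃_{j ∈ A×A} I_j`. -/
noncomputable def IA (A : Finset ℕ) : Set ℝ :=
  ⋃ j ∈ (A ×ˢ A : Finset (ℕ × ℕ)), Ij A j

open Classical in
/-- The expanding Markov map `T : I → ℝ`, given on `I_j`, `j = (a,a')`, by the inverse
branch `T = γ_j⁻¹ : x ↦ 1/(1/x − a) − a'` (and defined as `0` off `I`). -/
noncomputable def Tmap (A : Finset ℕ) (x : ℝ) : ℝ :=
  if h : ∃ j : ℕ × ℕ, j ∈ A ×ˢ A ∧ x ∈ Ij A j then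
    1 / (1 / x - (h.choose.1 : ℝ)) - (h.choose.2 : ℝ)
  else 0

/-- The invariant Cantor set `K = ⋂_{i ≥ 0} T^{−i}(I)`. -/
noncomputable def KA (A : Finset ℕ) : Set ℝ :=
  ⋂ n : ℕ, (Tmap A)^[n] ⁻¹' IA A

open Classical in
/-- The distortion function `τ = log |T'|`. On `I_j`, `j = (a,a')`, the branch
`T = γ_j⁻¹` has `T'(x) = (1 − a x)⁻²`, so `τ(x) = log|T'(x)| = −2 log|1 − a x|`
(and `τ = 0` off `I`). -/
noncomputable def tauA (A : Finset ℕ) (x : ℝ) : ℝ :=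
  if h : ∃ j : ℕ × ℕ, j ∈ A ×ˢ A ∧ x ∈ Ij A j then
    -2 * Real.log |1 - (h.choose.1 : ℝ) * x|
  else 0

open Classical in
/-- `|T'|`: on `I_j`, `j = (a,a')`, the branch derivative of `T = γ_j⁻¹` in absolute
value, `|T'(x)| = (1 − a x)⁻²` (and `0` off `I`), so that by the chain rule
`|(T^N)'(z)| = ∏_{i<N} |T'(T^i z)|`. -/
noncomputable def TderivAbs (A : Finset ℕ) (x : ℝ) : ℝ :=
  if h : ∃ j : ℕ × ℕ, j ∈ A ×ˢ A ∧ x ∈ Ij A j then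
    ((1 - (h.choose.1 : ℝ) * x)⁻¹) ^ 2
  else 0

/-- The Möbius map of `g_a` on the closed upper half-plane: `z ↦ 1/(z+a)`. -/
noncomputable def gmapC (a : ℕ) (z : ℂ) : ℂ := 1 / (z + (a : ℂ))

/-- The Möbius map `γ_j` of `g_a g_{a'}` on the closed upper half-plane for `j = (a,a')`. -/
noncomputable def gamC (j : ℕ × ℕ) (z : ℂ) : ℂ := gmapC j.1 (gmapC j.2 z)

/-- `I` viewed as a subset of `ℂ`. -/
noncomputable def IAC (A : Finset ℕ) : Set ℂ := (fun x : ℝ => (x : ℂ)) '' IA A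

lemma gam_mem_Icc (A : Finset ℕ) (hA1 : ∀ a ∈ A, 1 ≤ a) (j : ℕ × ℕ)
    (hj : j ∈ (A ×ˢ A : Finset (ℕ × ℕ))) (x : ℝ) (hx : 0 ≤ x) :
    gam j x ∈ Set.Icc (1 / (((A.sup id : ℕ) : ℝ) + 1)) 1 := by
  rw [Finset.mem_product] at hj
  have h1 : (1 : ℝ) ≤ (j.1 : ℝ) := by exact_mod_cast hA1 _ hj.1
  have h2 : (1 : ℝ) ≤ (j.2 : ℝ) := by exact_mod_cast hA1 _ hj.2
  have h3 : (j.1 : ℝ) ≤ ((A.sup id : ℕ) : ℝ) := by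
    exact_mod_cast Finset.le_sup (f := id) hj.1
  have hp : 0 < 1 / (x + (j.2 : ℝ)) := by positivity
  have hq : 1 / (x + (j.2 : ℝ)) ≤ 1 := by
    rw [div_le_one (by linarith)]; linarith
  unfold gam gmap
  constructor
  · apply one_div_le_one_div_of_le <;> linarith
  · rw [div_le_one (by linarith)]; linarith

lemma gam_mem_IA (A : Finset ℕ) (hA1 : ∀ a ∈ A, 1 ≤ a) (j : ℕ × ℕ)
    (hj : j ∈ (A ×ˢ A : Finset (ℕ × ℕ))) (x : ℝ)
    (hx : x ∈ Set.Icc (1 / (((A.sup id : ℕ) : ℝ) + 1)) 1) : gam j x ∈ IA A := by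
  unfold IA
  exact Set.mem_biUnion hj ⟨x, hx, rfl⟩

lemma IA_sub (A : Finset ℕ) (hA1 : ∀ a ∈ A, 1 ≤ a) (x : ℝ) (hx : x ∈ IA A) :
    x ∈ Set.Icc (1 / (((A.sup id : ℕ) : ℝ) + 1)) 1 := by
  unfold IA at hx
  simp only [Set.mem_iUnion] at hx
  obtain ⟨j, hj, y, hy, rfl⟩ := hx
  exact gam_mem_Icc A hA1 j hj y (le_trans (by positivity) hy.1)

lemma gamC_ofReal (j : ℕ × ℕ) (x : ℝ) : gamC j (x : ℂ) = ((gam j x : ℝ) : ℂ) := by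
  simp [gamC, gam, gmap, gmapC]

lemma gamC_formula (j : ℕ × ℕ) (z : ℂ) (h2 : z + (j.2 : ℂ) ≠ 0) :
    gamC j z = (z + j.2) / (j.1 * (z + j.2) + 1) := by
  unfold gamC gmapC
  have : 1 / (z + (j.2 : ℂ)) + j.1 = (j.1 * (z + j.2) + 1) / (z + j.2) := by
    field_simp; ring
  rw [this, one_div_div]

lemma gamC_dist (j : ℕ × ℕ) (h1 : 1 ≤ j.1) (h2 : 1 ≤ j.2) (z : ℂ) (x : ℝ)
    (hz : -(1 / 2) ≤ z.re) (hx : 0 ≤ x) :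
    dist (gamC j z) (gamC j x) ≤ 1 / 2 * dist z x := by
  have h1' : (1 : ℝ) ≤ (j.1 : ℝ) := by exact_mod_cast h1
  have h2' : (1 : ℝ) ≤ (j.2 : ℝ) := by exact_mod_cast h2
  have key : ∀ w : ℂ, -(1 / 2) ≤ w.re → w + (j.2 : ℂ) ≠ 0 := by
    intro w hw h
    have := congrArg Complex.re h
    simp at this
    linarith
  have hre : ∀ w : ℂ, w.re + 2 ≤ ‖(j.1 : ℂ) * (w + j.2) + 1‖ ∨ w.re + j.2 < 0 := by
    intro w
    by_cases h : w.re + j.2 < 0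
    · exact Or.inr h
    · left
      refine le_trans ?_ (Complex.re_le_norm _)
      simp
      nlinarith
  have nz : 1 ≤ ‖(j.1 : ℂ) * (z + j.2) + 1‖ := by
    rcases hre z with h | h <;> linarith
  have nx : 2 ≤ ‖(j.1 : ℂ) * ((x : ℂ) + j.2) + 1‖ := by
    rcases hre (x : ℂ) with h | h <;> simp only [Complex.ofReal_re] at h <;> linarith
  have ez : (j.1 : ℂ) * (z + j.2) + 1 ≠ 0 := by
    rw [← norm_pos_iff]; linarith
  have ex : (j.1 : ℂ) * ((x : ℂ) + j.2) + 1 ≠ 0 := by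
    rw [← norm_pos_iff]; linarith
  rw [gamC_formula j z (key z hz), gamC_formula j x (key x (by simp; linarith)),
    dist_eq_norm, dist_eq_norm]
  have : (z + (j.2 : ℂ)) / (j.1 * (z + j.2) + 1) - (x + j.2) / (j.1 * (x + j.2) + 1)
      = (z - x) / ((j.1 * (z + j.2) + 1) * (j.1 * (x + j.2) + 1)) := by
    rw [div_sub_div _ _ ez ex]
    congr 1
    ring
  rw [this, norm_div, norm_mul, div_le_iff₀ (by positivity)]
  have h2 : 2 ≤ ‖(j.1 : ℂ) * (z + j.2) + 1‖ * ‖(j.1 : ℂ) * ((x : ℂ) + j.2) + 1‖ := by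
    nlinarith
  nlinarith [norm_nonneg (z - (x : ℂ))]

/-- **Uniform contraction of the inverse branches near `I` (Lemma `contracting`).**
There are `r > 0` and `0 < κ < 1` such that for every `z` in the closed upper half-plane
with Euclidean distance `d_E(z, I) < r` and every `j = (a,a') ∈ A×A`,
`d_E(γ_j(z), I) ≤ κ · d_E(z, I)`. -/
theorem branches_contract (A : Finset ℕ) (hA : 2 ≤ A.card) (hA1 : ∀ a ∈ A, 1 ≤ a) :
    ∃ r κ : ℝ, 0 < r ∧ 0 < κ ∧ κ < 1 ∧
      ∀ z : ℂ, 0 ≤ z.im → Metric.infDist z (IAC A) < r →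
        ∀ j ∈ (A ×ˢ A : Finset (ℕ × ℕ)),
          Metric.infDist (gamC j z) (IAC A) ≤ κ * Metric.infDist z (IAC A) := by
  refine ⟨1 / 2, 1 / 2, by norm_num, by norm_num, by norm_num, ?_⟩
  intro z _ hz j hj
  have hne : (IAC A).Nonempty :=
    ⟨_, gam j 1, gam_mem_IA A hA1 j hj 1
      ⟨by rw [div_le_one (by positivity)]; simp, le_refl _⟩, rfl⟩
  by_contra hcon
  push Not at hcon
  have hlt : Metric.infDist z (IAC A)
      < min (1 / 2) (2 * Metric.infDist (gamC j z) (IAC A)) :=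
    lt_min hz (by linarith)
  obtain ⟨y, ⟨x, hx, rfl⟩, hy⟩ := (Metric.infDist_lt_iff hne).1 hlt
  simp only at hy
  have hxI := IA_sub A hA1 x hx
  have hx0 : 0 ≤ x := le_trans (by positivity) hxI.1
  have hy1 := lt_of_lt_of_le hy (min_le_left _ _)
  have hy2 := lt_of_lt_of_le hy (min_le_right _ _)
  have hzre : -(1 / 2) ≤ z.re := by
    have := Complex.abs_re_le_norm (z - x)
    rw [← dist_eq_norm] at this
    have h := (abs_le.1 this).1
    simp only [Complex.sub_re, Complex.ofReal_re] at h
    linarith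
  have hj' := Finset.mem_product.1 hj
  have hd := gamC_dist j (hA1 _ hj'.1) (hA1 _ hj'.2) z x hzre hx0
  have hm : gamC j (x : ℂ) ∈ IAC A :=
    ⟨gam j x, gam_mem_IA A hA1 j hj x hxI, (gamC_ofReal j x).symm⟩
  have := Metric.infDist_le_dist_of_mem (x := gamC j z) hm
  linarith
end

section
/- Let A ⊂ ℕ be a finite alphabet with |A| ≥ 2 and let Γ_A ⊂ SL₂(ℤ) be the semigroup generated by the matrices g_a g_{a'} for a, a' ∈ A, where g_a = [[0,1],[1,a]]. If γ₁, γ₂ ∈ Γ_A satisfy |tr(γ₁γ₂γ₁γ₂)| = |tr(γ₁²γ₂²)|, then tr(γ₁γ₂γ₁⁻¹γ₂⁻¹) = 2, i.e., the commutator of γ₁ and γ₂ is parabolic or the identity. -/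
/-- Products of generators have nonnegative entries. -/
lemma prod_entries_nonneg (A : Finset ℕ) (l : List SL2Z) (h : ∀ x ∈ l, x ∈ gensSet A) :
    ∀ i j, 0 ≤ l.prod.val i j := by
  induction l with
  | nil =>
    intro i j
    fin_cases i <;> fin_cases j <;> simp
  | cons x l ih =>
    have ih' := ih (fun y hy => h y (List.mem_cons_of_mem _ hy))
    obtain ⟨a, -, a', -, rfl⟩ := h x List.mem_cons_self
    have hx : ∀ i j, 0 ≤ (gPair a a').val i j := by
      intro i j
      fin_cases i <;> fin_cases j <;> simp [gPair] <;> positivity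
    intro i j
    rw [List.prod_cons, Matrix.SpecialLinearGroup.coe_mul, Matrix.mul_apply]
    exact Finset.sum_nonneg fun k _ => mul_nonneg (hx i k) (ih' k j)

lemma GammaA_entries_nonneg (A : Finset ℕ) (g : SL2Z) (h : g ∈ GammaA A) :
    ∀ i j, 0 ≤ g.val i j := by
  obtain ⟨l, -, hl, rfl⟩ := h
  exact prod_entries_nonneg A l hl

/-- If `γ₁, γ₂ ∈ Γ_A` satisfy `|tr(γ₁γ₂γ₁γ₂)| = |tr(γ₁²γ₂²)|`, then the commutator
`γ₁γ₂γ₁⁻¹γ₂⁻¹` has trace `2`, i.e. it is parabolic or the identity. -/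
theorem GammaA_equal_traces_implies_parabolic_commutator
    (A : Finset ℕ) (hA : 2 ≤ A.card) (hA1 : ∀ a ∈ A, 1 ≤ a)
    (γ₁ γ₂ : SL2Z) (h₁ : γ₁ ∈ GammaA A) (h₂ : γ₂ ∈ GammaA A)
    (htr : |(γ₁ * γ₂ * γ₁ * γ₂).val.trace| = |(γ₁ ^ 2 * γ₂ ^ 2).val.trace|) :
    (γ₁ * γ₂ * γ₁⁻¹ * γ₂⁻¹).val.trace = 2 := by
  have p₁ := GammaA_entries_nonneg A γ₁ h₁
  have p₂ := GammaA_entries_nonneg A γ₂ h₂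
  have d₁ := γ₁.det_coe
  have d₂ := γ₂.det_coe
  rw [Matrix.det_fin_two] at d₁ d₂
  have a1 := p₁ 0 0
  have b1 := p₁ 0 1
  have c1 := p₁ 1 0
  have e1 := p₁ 1 1
  have a2 := p₂ 0 0
  have b2 := p₂ 0 1
  have c2 := p₂ 1 0
  have e2 := p₂ 1 1
  simp only [pow_two, Matrix.SpecialLinearGroup.coe_mul, Matrix.SpecialLinearGroup.coe_inv,
    Matrix.adjugate_fin_two, Matrix.trace_fin_two, Matrix.mul_apply, Fin.sum_univ_two,
    Matrix.of_apply, Matrix.cons_val', Matrix.cons_val_zero, Matrix.cons_val_one,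
    Matrix.cons_val_fin_one] at htr ⊢
  generalize γ₁.val 0 0 = a at *
  generalize γ₁.val 0 1 = b at *
  generalize γ₁.val 1 0 = c at *
  generalize γ₁.val 1 1 = d at *
  generalize γ₂.val 0 0 = p at *
  generalize γ₂.val 0 1 = q at *
  generalize γ₂.val 1 0 = r at *
  generalize γ₂.val 1 1 = s at *
  rw [abs_of_nonneg (by positivity), abs_of_nonneg (by positivity)] at htr
  linear_combination htr + 2 * (p * s - q * r) * d₁ + 2 * d₂
end
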